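/- Let α ∈ (0,2), let ℓ : (0,∞) → (0,∞) be slowly varying at infinity (ℓ(λx)/ℓ(λ) → 1 as λ → +∞ for every x > 0), and assume φ(λ)/(λ^{α/2} ℓ(λ)) → 1 as λ → +∞. Then: (a) for every x > 0, φ'(λx)/φ'(λ) → x^{α/2−1} as λ → +∞; and (b) for every integer d ≥ 3, the Lévy density of the subordinate Brownian motion satisfies j(r) ≍ r^{−d−α} ℓ(r^{−2}) as r → 0+. -/

import Mathlib

open MeasureTheory Set Filter Topology

/-!
The Bernstein function `φ` is concave and regularly varying with index `α / 2`, so the monotone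
density theorem gives `l φ'(l) ~ (α / 2) φ(l)`; this is (a).

For (b), Brownian scaling gives `j(r) = r ^ (2 - d) ∫ p(t, 1) μ(r² t) dt`, with `p` the Gaussian
kernel, and reduces the claim to comparing `μ(1 / l)` with `l φ(l)`. The upper bound is immediate
from monotonicity of `μ`, and concavity of `φ` extends it to all `t` in the integral at the cost of
a factor that is integrable against `p(t, 1)`. For the lower bound, the part of
`φ'(l) = ∫ t e^{-lt} μ(t) dt` over `t < 1 / (l y)` is at most `e φ'(l y)`, which for large `y` is a
small fraction of `φ'(l)` because `φ'` has index `α / 2 - 1 < 0`; the rest is at most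
`μ(1 / (l y)) / l²`.
-/

open Asymptotics

lemma exists_bounds_of_isTheta_nhdsGT_zero {f g : ℝ → ℝ} (hfg : f =Θ[𝓝[>] 0] g)
    (hf : ∀ r, 0 < r → 0 ≤ f r) (hg : ∀ r, 0 < r → 0 ≤ g r) :
    ∃ c C r₀ : ℝ, 0 < c ∧ c ≤ C ∧ 0 < r₀ ∧
      ∀ r, 0 < r → r < r₀ → c * g r ≤ f r ∧ f r ≤ C * g r := by
  obtain ⟨C, hle⟩ := hfg.1.bound
  obtain ⟨c, hc, hge⟩ := hfg.2.exists_pos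
  obtain ⟨r₀, hr₀, hr⟩ := mem_nhdsGT_iff_exists_Ioo_subset.1 (hle.and hge.bound)
  refine ⟨c⁻¹, max c⁻¹ C, r₀, inv_pos.2 hc, le_max_left _ _, hr₀, fun r h0 hrr₀ => ?_⟩
  obtain ⟨hle, hge⟩ := hr ⟨h0, hrr₀⟩
  rw [Real.norm_of_nonneg (hf r h0), Real.norm_of_nonneg (hg r h0)] at hle hge
  exact ⟨(inv_mul_le_iff₀ hc).2 hge,
    hle.trans (mul_le_mul_of_nonneg_right (le_max_right _ _) (hg r h0))⟩

section RegularVariation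

/-- Regular variation at infinity with index `ρ`; slow variation is the case `ρ = 0`. -/
def RegularlyVarying (f : ℝ → ℝ) (ρ : ℝ) : Prop :=
  ∀ x, 0 < x → Tendsto (fun l => f (l * x) / f l) atTop (𝓝 (x ^ ρ))

lemma div_sub_one_le_of_supergradient {f f' : ℝ → ℝ} {l x : ℝ}
    (hf' : ∀ x y, 0 < x → 0 < y → f y ≤ f x + f' x * (y - x)) (hl : 0 < l)
    (hfl : 0 < f l) (hx : 0 < x) : f (l * x) / f l - 1 ≤ l * f' l / f l * (x - 1) := by
  have := hf' l (l * x) hl (mul_pos hl hx)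
  rw [div_mul_eq_mul_div, le_div_iff₀ hfl, sub_mul, div_mul_cancel₀ _ hfl.ne']
  linarith

namespace RegularlyVarying

variable {f f' g : ℝ → ℝ} {ρ σ x : ℝ}

lemma of_isEquivalent (hg : RegularlyVarying g ρ) (h : f ~[atTop] g) : RegularlyVarying f ρ :=
  fun x hx => ((h.comp_tendsto (tendsto_id.atTop_mul_const hx)).div h).symm.tendsto_nhds (hg x hx)

lemma rpow_mul (hf : RegularlyVarying f σ) (ρ : ℝ) :
    RegularlyVarying (fun l => l ^ ρ * f l) (ρ + σ) := by
  intro x hx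
  rw [Real.rpow_add hx]
  refine ((hf x hx).const_mul (x ^ ρ)).congr' ?_
  filter_upwards [eventually_gt_atTop 0] with l hl
  rw [Real.mul_rpow hl.le hx.le]
  field_simp

lemma isTheta_comp_mul (hf : RegularlyVarying f ρ) (hx : 0 < x) :
    f =Θ[atTop] fun l => f (l * x) :=
  isTheta_of_div_tendsto_nhds_ne_zero (hf x hx) (Real.rpow_pos_of_pos hx ρ).ne'

/-- The quotient in `RegularlyVarying` is `0` where `f` vanishes, but tends to `1` for `x = 1`. -/
lemma eventually_ne_zero (hf : RegularlyVarying f ρ) : ∀ᶠ l in atTop, f l ≠ 0 := by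
  have hone : (1 : ℝ) ^ ρ ≠ 0 := by simp
  filter_upwards [(hf 1 one_pos).eventually_ne hone] with l hl
  exact (div_ne_zero_iff.1 hl).2

lemma eventually_pos (hf : RegularlyVarying f ρ) (hnonneg : ∀ l, 0 < l → 0 ≤ f l) :
    ∀ᶠ l in atTop, 0 < f l := by
  filter_upwards [hf.eventually_ne_zero, eventually_gt_atTop 0] with l hne hl
  exact (hnonneg l hl).lt_of_ne' hne

/-- The monotone density theorem for concave functions: the difference quotients of `f` over
`[l, l * x]` bound `f' l` from one side for `x > 1` and from the other for `x < 1`, and after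
normalization both tend to the derivative of `x ^ ρ` at `1` as `x → 1`. -/
theorem tendsto_mul_supergradient_div (hf : RegularlyVarying f ρ)
    (hpos : ∀ᶠ l in atTop, 0 < f l)
    (hf' : ∀ x y, 0 < x → 0 < y → f y ≤ f x + f' x * (y - x)) :
    Tendsto (fun l => l * f' l / f l) atTop (𝓝 ρ) := by
  have hslope : Tendsto (slope (fun x : ℝ => x ^ ρ) 1) (𝓝[≠] 1) (𝓝 ρ) := by
    simpa using (Real.hasDerivAt_rpow_const (x := 1) (p := ρ) (.inl one_ne_zero)).tendsto_slope
  have hquot (x : ℝ) (hx : 0 < x) : Tendsto (fun l => (f (l * x) / f l - 1) / (x - 1)) atTop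
      (𝓝 (slope (fun x : ℝ => x ^ ρ) 1 x)) := by
    rw [slope_def_field, Real.one_rpow]
    exact ((hf x hx).sub_const 1).div_const _
  refine tendsto_order.2 ⟨fun a ha => ?_, fun a ha => ?_⟩
  · obtain ⟨x, hax, hx : 1 < x⟩ := (((hslope.mono_left (nhdsGT_le_nhdsNE 1)).eventually_const_lt
      ha).and self_mem_nhdsWithin).exists
    filter_upwards [(hquot x (by linarith)).eventually_const_lt hax, hpos, eventually_gt_atTop 0]
      with l hl hfl hl0
    refine hl.trans_le ((div_le_iff₀ (by linarith)).2 ?_)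
    exact div_sub_one_le_of_supergradient hf' hl0 hfl (by linarith)
  · obtain ⟨x, ⟨hax, hx : x < 1⟩, hx0⟩ := (((hslope.mono_left
      (nhdsLT_le_nhdsNE 1)).eventually_lt_const ha).and self_mem_nhdsWithin |>.and
        (mem_nhdsWithin_of_mem_nhds (lt_mem_nhds one_pos))).exists
    filter_upwards [(hquot x hx0).eventually_lt_const hax, hpos, eventually_gt_atTop 0]
      with l hl hfl hl0
    refine ((le_div_iff_of_neg (by linarith)).2 ?_).trans_lt hl
    exact div_sub_one_le_of_supergradient hf' hl0 hfl hx0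

theorem supergradient (hf : RegularlyVarying f ρ) (hρ : ρ ≠ 0) (hpos : ∀ᶠ l in atTop, 0 < f l)
    (hf' : ∀ x y, 0 < x → 0 < y → f y ≤ f x + f' x * (y - x)) :
    RegularlyVarying f' (ρ - 1) := by
  have hlim : f' ~[atTop] fun l => l ^ (-1 : ℝ) * (ρ * f l) := by
    refine isEquivalent_of_tendsto_one ?_
    have := (hf.tendsto_mul_supergradient_div hpos hf').div_const ρ
    rw [div_self hρ] at this
    refine this.congr' ?_
    filter_upwards [eventually_gt_atTop 0] with l hl
    rw [Pi.div_apply, Real.rpow_neg_one]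
    field_simp
  have hρf : RegularlyVarying (fun l => ρ * f l) ρ := fun x hx => by
    simpa only [mul_div_mul_left _ _ hρ] using hf x hx
  rw [sub_eq_neg_add]
  exact (hρf.rpow_mul (-1)).of_isEquivalent hlim

end RegularlyVarying

end RegularVariation

section LevyDensity

/-- Density on `(0, ∞)` of the Lévy measure of a subordinator. Values at `t ≤ 0` are arbitrary. -/
structure IsLevyDensity (μ : ℝ → ℝ) : Prop where
  nonneg : ∀ t, 0 < t → 0 ≤ μ t
  integrableOn : IntegrableOn (fun t => min 1 t * μ t) (Ioi 0)

/-- The Bernstein function `φ` of the driftless subordinator with Lévy density `μ`. -/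
noncomputable def laplaceExponent (μ : ℝ → ℝ) (l : ℝ) : ℝ :=
  ∫ t in Ioi (0 : ℝ), (1 - Real.exp (-(l * t))) * μ t

/-- The integral formula for the derivative `φ'` of `laplaceExponent μ`. -/
noncomputable def laplaceExponentDeriv (μ : ℝ → ℝ) (l : ℝ) : ℝ :=
  ∫ t in Ioi (0 : ℝ), t * Real.exp (-(l * t)) * μ t

lemma laplaceExponent_comp_mul_left (μ : ℝ → ℝ) {a : ℝ} (ha : 0 < a) (l : ℝ) :
    laplaceExponent (fun t => μ (a * t)) l = a⁻¹ * laplaceExponent μ (l / a) := by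
  have := integral_comp_mul_left_Ioi (fun t => (1 - Real.exp (-(l / a * t))) * μ t) 0 ha
  rw [mul_zero, smul_eq_mul] at this
  simp only [laplaceExponent, ← this, ← mul_assoc, div_mul_cancel₀ l ha.ne']

lemma mul_exp_neg_le_one_sub_exp_neg (u : ℝ) : u * Real.exp (-u) ≤ 1 - Real.exp (-u) := by
  have h : (u + 1) * Real.exp (-u) ≤ Real.exp u * Real.exp (-u) := by
    gcongr
    exact Real.add_one_le_exp u
  rw [← Real.exp_add, add_neg_cancel, Real.exp_zero] at h
  linarith

lemma one_sub_exp_neg_mul_nonneg {l t : ℝ} (hl : 0 < l) (ht : 0 < t) :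
    0 ≤ 1 - Real.exp (-(l * t)) :=
  sub_nonneg.2 (Real.exp_le_one_iff.2 (neg_nonpos.2 (mul_pos hl ht).le))

namespace IsLevyDensity

variable {μ : ℝ → ℝ} {a l x y : ℝ}

lemma integrableOn_mul (hμ : IsLevyDensity μ) {f : ℝ → ℝ} (hf : Measurable f) {C : ℝ}
    (hfC : ∀ t, 0 < t → |f t| ≤ C * min 1 t) : IntegrableOn (fun t => f t * μ t) (Ioi 0) := by
  have hbdd : ∀ᵐ t ∂volume.restrict (Ioi (0 : ℝ)), ‖f t / min 1 t‖ ≤ C := by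
    refine ae_restrict_of_forall_mem measurableSet_Ioi fun t (ht : 0 < t) => ?_
    have hmin : 0 < min 1 t := lt_min one_pos ht
    rw [Real.norm_eq_abs, abs_div, abs_of_pos hmin, div_le_iff₀ hmin]
    exact hfC t ht
  have hmeas : Measurable fun t => f t / min 1 t := by fun_prop
  refine IntegrableOn.congr_fun (hμ.integrableOn.bdd_mul hmeas.aestronglyMeasurable hbdd)
    (fun t (ht : 0 < t) => ?_) measurableSet_Ioi
  have hmin : min 1 t ≠ 0 := (lt_min one_pos ht).ne'
  simp only [← mul_assoc, div_mul_cancel₀ _ hmin]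

lemma comp_mul_left (hμ : IsLevyDensity μ) (ha : 0 < a) : IsLevyDensity fun t => μ (a * t) where
  nonneg t ht := hμ.nonneg _ (mul_pos ha ht)
  integrableOn := by
    have hint : IntegrableOn (fun t => min 1 (t / a) * μ t) (Ioi (a * 0)) := by
      rw [mul_zero]
      refine hμ.integrableOn_mul (by fun_prop) (C := 1 + a⁻¹) fun t ht => ?_
      have hta : 0 < t / a := div_pos ht ha
      rw [abs_of_pos (lt_min one_pos hta), mul_min_of_nonneg _ _ (by positivity)]
      refine min_le_min ?_ ?_
      · simp [ha.le]
      · rw [div_eq_inv_mul]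
        gcongr
        linarith
    simpa [mul_div_cancel_left₀ _ ha.ne'] using (integrableOn_Ioi_comp_mul_left_iff _ 0 ha).2 hint

lemma integrableOn_one_sub_exp_mul (hμ : IsLevyDensity μ) (hl : 0 < l) :
    IntegrableOn (fun t => (1 - Real.exp (-(l * t))) * μ t) (Ioi 0) := by
  refine hμ.integrableOn_mul (by fun_prop) (C := 1 + l) fun t ht => ?_
  rw [abs_of_nonneg (one_sub_exp_neg_mul_nonneg hl ht), mul_min_of_nonneg _ _ (by positivity)]
  refine le_min ?_ ?_
  · linarith [Real.exp_pos (-(l * t))]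
  · linarith [Real.add_one_le_exp (-(l * t))]

lemma integrableOn_mul_exp_mul (hμ : IsLevyDensity μ) (hl : 0 < l) :
    IntegrableOn (fun t => t * Real.exp (-(l * t)) * μ t) (Ioi 0) := by
  refine hμ.integrableOn_mul (by fun_prop) (C := l⁻¹ + 1) fun t ht => ?_
  have hexp := one_sub_exp_neg_mul_nonneg hl ht
  rw [abs_of_nonneg (by positivity), mul_min_of_nonneg _ _ (by positivity), mul_one]
  refine le_min ?_ ?_
  · have hle : l * t * Real.exp (-(l * t)) ≤ 1 :=
      (mul_exp_neg_le_one_sub_exp_neg _).trans (sub_le_self _ (Real.exp_pos _).le)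
    rw [← mul_le_mul_iff_of_pos_left hl, mul_add, mul_inv_cancel₀ hl.ne']
    linarith
  · nlinarith [inv_pos.2 hl]

lemma laplaceExponent_nonneg (hμ : IsLevyDensity μ) (hl : 0 < l) : 0 ≤ laplaceExponent μ l :=
  setIntegral_nonneg measurableSet_Ioi fun t ht =>
    mul_nonneg (one_sub_exp_neg_mul_nonneg hl ht) (hμ.nonneg t ht)

lemma laplaceExponentDeriv_nonneg (hμ : IsLevyDensity μ) : 0 ≤ laplaceExponentDeriv μ l :=
  setIntegral_nonneg measurableSet_Ioi fun t (ht : 0 < t) =>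
    mul_nonneg (by positivity) (hμ.nonneg t ht)

lemma laplaceExponent_le_add_deriv_mul (hμ : IsLevyDensity μ) (hx : 0 < x) (hy : 0 < y) :
    laplaceExponent μ y ≤ laplaceExponent μ x + laplaceExponentDeriv μ x * (y - x) := by
  have hintx := hμ.integrableOn_one_sub_exp_mul hx
  have hintx' := (hμ.integrableOn_mul_exp_mul hx).mul_const (y - x)
  rw [laplaceExponent, laplaceExponent, laplaceExponentDeriv, ← integral_mul_const,
    ← integral_add hintx hintx']
  refine setIntegral_mono_on (hμ.integrableOn_one_sub_exp_mul hy) (hintx.add hintx')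
    measurableSet_Ioi fun t ht => ?_
  have htangent : Real.exp (-(x * t)) * (1 - t * (y - x)) ≤ Real.exp (-(y * t)) := by
    rw [show -(y * t) = -(x * t) + -(t * (y - x)) by ring, Real.exp_add]
    gcongr
    exact Real.one_sub_le_exp_neg _
  linarith [mul_le_mul_of_nonneg_right htangent (hμ.nonneg t ht)]

lemma mul_laplaceExponentDeriv_le (hμ : IsLevyDensity μ) (hl : 0 < l) :
    l * laplaceExponentDeriv μ l ≤ laplaceExponent μ l := by
  rw [laplaceExponentDeriv, laplaceExponent, ← integral_const_mul]
  refine setIntegral_mono_on ((hμ.integrableOn_mul_exp_mul hl).const_mul l)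
    (hμ.integrableOn_one_sub_exp_mul hl) measurableSet_Ioi fun t ht => ?_
  rw [← mul_assoc, ← mul_assoc]
  exact mul_le_mul_of_nonneg_right (mul_exp_neg_le_one_sub_exp_neg _) (hμ.nonneg t ht)

lemma laplaceExponent_mul_le (hμ : IsLevyDensity μ) (hl : 0 < l) (hx : 0 < x) :
    laplaceExponent μ (l * x) ≤ (1 + x) * laplaceExponent μ l := by
  have htangent := hμ.laplaceExponent_le_add_deriv_mul hl (mul_pos hl hx)
  have hderiv := mul_le_mul_of_nonneg_left (hμ.mul_laplaceExponentDeriv_le hl) hx.le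
  have hnonneg := mul_nonneg hl.le (hμ.laplaceExponentDeriv_nonneg (l := l))
  linarith

theorem regularlyVarying_laplaceExponentDeriv (hμ : IsLevyDensity μ) {ρ : ℝ} (hρ : ρ ≠ 0)
    (hφ : RegularlyVarying (laplaceExponent μ) ρ) :
    RegularlyVarying (laplaceExponentDeriv μ) (ρ - 1) :=
  hφ.supergradient hρ (hφ.eventually_pos fun _ => hμ.laplaceExponent_nonneg)
    fun _ _ => hμ.laplaceExponent_le_add_deriv_mul

end IsLevyDensity

end LevyDensity

section MonotoneLevyDensity

lemma mul_measureReal_le_setIntegral_of_subset {X : Type*} [MeasurableSpace X] {ν : Measure X}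
    {f : X → ℝ} {s t : Set X} {c : ℝ} (hs : MeasurableSet s) (ht : MeasurableSet t) (hst : s ⊆ t)
    (hνs : ν s ≠ ⊤) (hf : ∀ x ∈ t, 0 ≤ f x) (hc : ∀ x ∈ s, c ≤ f x) (hint : IntegrableOn f t ν) :
    c * ν.real s ≤ ∫ x in t, f x ∂ν :=
  (setIntegral_ge_of_const_le_real hs hνs hc (hint.mono_set hst)).trans
    (setIntegral_mono_set hint (ae_restrict_of_forall_mem ht hf) hst.eventuallyLE)

lemma integrableOn_mul_exp_neg_mul {l : ℝ} (hl : 0 < l) :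
    IntegrableOn (fun t => t * Real.exp (-(l * t))) (Ioi 0) := by
  simpa using integrableOn_rpow_mul_exp_neg_mul_rpow (s := 1) (p := 1) (by norm_num) one_pos hl

lemma integral_mul_exp_neg_mul_Ioi {l : ℝ} (hl : 0 < l) :
    ∫ t in Ioi (0 : ℝ), t * Real.exp (-(l * t)) = (l ^ 2)⁻¹ := by
  have := Real.integral_rpow_mul_exp_neg_mul_Ioi two_pos hl
  norm_num at this
  exact this

namespace IsLevyDensity

variable {μ : ℝ → ℝ} {l t y σ ρ : ℝ}

lemma mul_le_laplaceExponent_inv (hμ : IsLevyDensity μ) (hanti : AntitoneOn μ (Ioi 0))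
    (ht : 0 < t) : t * μ t ≤ 6 * laplaceExponent μ t⁻¹ := by
  have hIoc : ∀ s ∈ Ioc (t / 2) t, 1 / 3 * μ t ≤ (1 - Real.exp (-(t⁻¹ * s))) * μ s := by
    rintro s ⟨hts, hst⟩
    have hhalf : 1 / 2 ≤ t⁻¹ * s := by
      rw [le_inv_mul_iff₀ ht]
      linarith
    have hexp : 1 / 3 ≤ 1 - Real.exp (-(t⁻¹ * s)) := by
      nlinarith [mul_exp_neg_le_one_sub_exp_neg (t⁻¹ * s), Real.exp_pos (-(t⁻¹ * s))]
    have hs : 0 < s := by linarith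
    exact mul_le_mul hexp (hanti hs ht hst) (hμ.nonneg t ht) (by linarith)
  have hnonneg : ∀ s ∈ Ioi (0 : ℝ), 0 ≤ (1 - Real.exp (-(t⁻¹ * s))) * μ s := fun s hs =>
    mul_nonneg (one_sub_exp_neg_mul_nonneg (inv_pos.2 ht) hs) (hμ.nonneg s hs)
  have hle := mul_measureReal_le_setIntegral_of_subset measurableSet_Ioc measurableSet_Ioi
    (fun s hs => (half_pos ht).trans hs.1) measure_Ioc_lt_top.ne hnonneg hIoc
    (hμ.integrableOn_one_sub_exp_mul (inv_pos.2 ht))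
  rw [Real.volume_real_Ioc_of_le (by linarith)] at hle
  rw [laplaceExponent]
  linarith

/-- Splits the integral at `(l * y)⁻¹`: below it the exponential is traded for one at rate `l * y`,
above it the density is bounded by its value there. -/
lemma laplaceExponentDeriv_le (hμ : IsLevyDensity μ) (hanti : AntitoneOn μ (Ioi 0)) (hl : 0 < l)
    (hy : 0 < y) : laplaceExponentDeriv μ l ≤
      Real.exp 1 * laplaceExponentDeriv μ (l * y) + μ (l * y)⁻¹ * (l ^ 2)⁻¹ := by
  have hly : 0 < l * y := mul_pos hl hy
  have hint := (hμ.integrableOn_mul_exp_mul hly).const_mul (Real.exp 1)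
  have hint' := (integrableOn_mul_exp_neg_mul hl).const_mul (μ (l * y)⁻¹)
  rw [laplaceExponentDeriv, laplaceExponentDeriv, ← integral_mul_exp_neg_mul_Ioi hl,
    ← integral_const_mul, ← integral_const_mul, ← integral_add hint hint']
  refine setIntegral_mono_on (hμ.integrableOn_mul_exp_mul hl) (hint.add hint') measurableSet_Ioi
    fun t (ht : 0 < t) => ?_
  have hμt := hμ.nonneg t ht
  have hμly := hμ.nonneg _ (inv_pos.2 hly)
  rcases le_total t (l * y)⁻¹ with hsmall | hlarge
  · have hexp : Real.exp (-(l * t)) ≤ Real.exp 1 * Real.exp (-(l * y * t)) := by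
      rw [← Real.exp_add, Real.exp_le_exp]
      have hlt : 0 < l * t := mul_pos hl ht
      have := (le_inv_mul_iff₀ hly).1 (by rwa [mul_one] : t ≤ (l * y)⁻¹ * 1)
      linarith
    calc t * Real.exp (-(l * t)) * μ t
        ≤ t * (Real.exp 1 * Real.exp (-(l * y * t))) * μ t := by gcongr
      _ = Real.exp 1 * (t * Real.exp (-(l * y * t)) * μ t) := by ring
      _ ≤ _ := le_add_of_nonneg_right (by positivity)
  · calc t * Real.exp (-(l * t)) * μ t
        ≤ t * Real.exp (-(l * t)) * μ (l * y)⁻¹ := by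
          gcongr
          exact hanti (inv_pos.2 hly) ht hlarge
      _ = μ (l * y)⁻¹ * (t * Real.exp (-(l * t))) := mul_comm _ _
      _ ≤ _ := le_add_of_nonneg_left (by positivity)

/-- For `y` large, the first term of `laplaceExponentDeriv_le` is at most half the left side. -/
lemma exists_sq_mul_laplaceExponentDeriv_isBigO (hμ : IsLevyDensity μ)
    (hanti : AntitoneOn μ (Ioi 0)) (hσ : σ < 0)
    (hφ' : RegularlyVarying (laplaceExponentDeriv μ) σ) :
    ∃ y, 0 < y ∧ (fun l => l ^ 2 * laplaceExponentDeriv μ l) =O[atTop] fun l => μ (l * y)⁻¹ := by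
  have hlim : Tendsto (fun y : ℝ => Real.exp 1 * y ^ σ) atTop (𝓝 0) := by
    simpa using (tendsto_rpow_neg_atTop (neg_pos.2 hσ)).const_mul (Real.exp 1)
  obtain ⟨y, hyσ, hy⟩ :=
    ((hlim.eventually_lt_const one_half_pos).and (eventually_gt_atTop 0)).exists
  refine ⟨y, hy, .of_bound 2 ?_⟩
  filter_upwards [((hφ' y hy).const_mul (Real.exp 1)).eventually_lt_const hyσ,
    hφ'.eventually_pos fun _ _ => hμ.laplaceExponentDeriv_nonneg, eventually_gt_atTop 0]
    with l hratio hpos hl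
  have hsplit := hμ.laplaceExponentDeriv_le hanti hl hy
  have hμly := hμ.nonneg _ (inv_pos.2 (mul_pos hl hy))
  rw [← mul_div_assoc, div_lt_iff₀ hpos] at hratio
  rw [Real.norm_of_nonneg (by positivity), Real.norm_of_nonneg hμly]
  have hhalf : laplaceExponentDeriv μ l ≤ 2 * μ (l * y)⁻¹ * (l ^ 2)⁻¹ := by linarith
  rwa [le_mul_inv_iff₀ (by positivity), mul_comm] at hhalf

lemma sq_mul_laplaceExponentDeriv_isBigO (hμ : IsLevyDensity μ) (hanti : AntitoneOn μ (Ioi 0))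
    (hσ : σ < 0) (hφ' : RegularlyVarying (laplaceExponentDeriv μ) σ) :
    (fun l => l ^ 2 * laplaceExponentDeriv μ l) =O[atTop] fun l => μ l⁻¹ := by
  obtain ⟨y, hy, hO⟩ := hμ.exists_sq_mul_laplaceExponentDeriv_isBigO hanti hσ hφ'
  have hrescaled := hO.comp_tendsto (tendsto_id.atTop_mul_const (inv_pos.2 hy))
  simp only [Function.comp_def, id, inv_mul_cancel_right₀ hy.ne'] at hrescaled
  refine IsBigO.trans ?_ hrescaled
  have hsq : (fun l : ℝ => l ^ 2) =O[atTop] fun l => (l * y⁻¹) ^ 2 := by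
    refine .of_bound (y ^ 2) (.of_forall fun l => le_of_eq ?_)
    rw [← Real.norm_of_nonneg (sq_nonneg y), ← norm_mul, mul_pow, inv_pow]
    field_simp
  exact hsq.mul (hφ'.isTheta_comp_mul (inv_pos.2 hy)).isBigO

theorem mul_laplaceExponent_isBigO (hμ : IsLevyDensity μ) (hanti : AntitoneOn μ (Ioi 0))
    (hρ0 : 0 < ρ) (hρ1 : ρ < 1) (hφ : RegularlyVarying (laplaceExponent μ) ρ) :
    (fun l => l * laplaceExponent μ l) =O[atTop] fun l => μ l⁻¹ := by
  have hlim := hφ.tendsto_mul_supergradient_div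
    (hφ.eventually_pos fun _ => hμ.laplaceExponent_nonneg)
    fun _ _ => hμ.laplaceExponent_le_add_deriv_mul
  have hO := (isBigO_refl (fun l : ℝ => l) atTop).mul
    (isBigO_of_div_tendsto_nhds_of_ne_zero hlim hρ0.ne')
  simp only [← mul_assoc, ← sq] at hO
  exact hO.trans (hμ.sq_mul_laplaceExponentDeriv_isBigO hanti (sub_neg.2 hρ1)
    (hμ.regularlyVarying_laplaceExponentDeriv hρ0.ne' hφ))

end IsLevyDensity

end MonotoneLevyDensity

section JumpDensity

/-- The Gaussian density at time `t` and distance `r` from the origin, for Brownian motion run at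
twice the usual speed. The dimension `d` is an arbitrary real parameter. -/
noncomputable def heatKernel (d t r : ℝ) : ℝ :=
  (4 * Real.pi * t) ^ (-d / 2) * Real.exp (-(r ^ 2 / (4 * t)))

/-- The radial Lévy density `j` of the `d`-dimensional Brownian motion subordinated by the
subordinator with Lévy density `μ`. -/
noncomputable def jumpDensity (d : ℝ) (μ : ℝ → ℝ) (r : ℝ) : ℝ :=
  ∫ t in Ioi (0 : ℝ), heatKernel d t r * μ t

variable {d r t : ℝ} {μ : ℝ → ℝ}

lemma heatKernel_pos (ht : 0 < t) : 0 < heatKernel d t r := by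
  unfold heatKernel
  positivity

lemma measurable_heatKernel : Measurable fun t => heatKernel d t r := by
  unfold heatKernel
  fun_prop

lemma heatKernel_sq_mul (hr : 0 < r) (ht : 0 < t) :
    heatKernel d (r ^ 2 * t) r = r ^ (-d) * heatKernel d t 1 := by
  have hpow : (r ^ 2) ^ (-d / 2) = r ^ (-d) := by
    rw [← Real.rpow_natCast_mul hr.le]
    congr 1
    push_cast
    ring
  have hexp : r ^ 2 / (4 * (r ^ 2 * t)) = 1 ^ 2 / (4 * t) := by
    field_simp
  rw [heatKernel, heatKernel, hexp, mul_left_comm, Real.mul_rpow (by positivity) (by positivity),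
    hpow, mul_assoc]

lemma jumpDensity_eq_rpow_mul (hr : 0 < r) :
    jumpDensity d μ r = r ^ (2 - d) * jumpDensity d (fun t => μ (r ^ 2 * t)) 1 := by
  have hr2 : 0 < r ^ 2 := by positivity
  have hscale := integral_comp_mul_left_Ioi' (fun t => heatKernel d t r * μ t) 0 hr2
  have hker : ∫ t in Ioi 0, heatKernel d (r ^ 2 * t) r * μ (r ^ 2 * t) =
      r ^ (-d) * jumpDensity d (fun t => μ (r ^ 2 * t)) 1 := by
    rw [jumpDensity, ← integral_const_mul]
    refine setIntegral_congr_fun measurableSet_Ioi fun t ht => ?_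
    simp only [heatKernel_sq_mul hr ht, mul_assoc]
  rw [mul_zero, smul_eq_mul, hker] at hscale
  rw [jumpDensity, ← hscale, sub_eq_add_neg, Real.rpow_add hr, Real.rpow_two, mul_assoc]

/-- Under `t ↦ t⁻¹` this is a Gamma integral. -/
lemma integrableOn_rpow_mul_exp_neg_div {a b : ℝ} (ha : a < -1) (hb : 0 < b) :
    IntegrableOn (fun t => t ^ a * Real.exp (-(b / t))) (Ioi 0) := by
  have hgamma : IntegrableOn (fun u => u ^ (-a - 2) * Real.exp (-b * u ^ (1 : ℝ))) (Ioi 0) :=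
    integrableOn_rpow_mul_exp_neg_mul_rpow (by linarith) one_pos hb
  refine ((integrableOn_Ioi_comp_rpow_iff' _ (by norm_num : (-1 : ℝ) ≠ 0)).2 hgamma).congr_fun
    (fun t (ht : 0 < t) => ?_) measurableSet_Ioi
  have hpow : t ^ (-1 - 1 : ℝ) * (t ^ (-1 : ℝ)) ^ (-a - 2) = t ^ a := by
    rw [← Real.rpow_mul ht.le, ← Real.rpow_add ht]
    congr 1
    ring
  simp only [smul_eq_mul, ← mul_assoc, hpow, Real.rpow_one]
  rw [Real.rpow_neg_one, neg_mul, div_eq_mul_inv]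

lemma integrableOn_heatKernel_mul_rpow {p : ℝ} (hp : p + 1 < d / 2) (hr : 0 < r) :
    IntegrableOn (fun t => heatKernel d t r * t ^ p) (Ioi 0) := by
  have hint := (integrableOn_rpow_mul_exp_neg_div (a := -d / 2 + p) (b := r ^ 2 / 4)
    (by linarith) (by positivity)).const_mul ((4 * Real.pi) ^ (-d / 2))
  refine IntegrableOn.congr_fun hint (fun t (ht : 0 < t) => ?_) measurableSet_Ioi
  rw [heatKernel, Real.mul_rpow (by positivity) ht.le, Real.rpow_add ht, div_div]
  ring

lemma integrableOn_heatKernel_one_mul_rpow_add (hd : 0 < d) :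
    IntegrableOn (fun t => heatKernel d t 1 * (t ^ (-1 : ℝ) + t ^ (-2 : ℝ))) (Ioi 0) := by
  simp only [mul_add]
  exact (integrableOn_heatKernel_mul_rpow (by linarith) one_pos).add
    (integrableOn_heatKernel_mul_rpow (by linarith) one_pos)

lemma antitoneOn_comp_mul_left {a : ℝ} (hμ : AntitoneOn μ (Ioi 0)) (ha : 0 < a) :
    AntitoneOn (fun t => μ (a * t)) (Ioi 0) :=
  fun _ hs _ ht hst => hμ (mul_pos ha hs) (mul_pos ha ht) (mul_le_mul_of_nonneg_left hst ha.le)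

namespace IsLevyDensity

lemma le_laplaceExponent_one_mul_rpow_add (hμ : IsLevyDensity μ) (hanti : AntitoneOn μ (Ioi 0))
    (ht : 0 < t) : μ t ≤ 6 * laplaceExponent μ 1 * (t ^ (-1 : ℝ) + t ^ (-2 : ℝ)) := by
  have hφ : laplaceExponent μ t⁻¹ ≤ (1 + t⁻¹) * laplaceExponent μ 1 := by
    simpa using hμ.laplaceExponent_mul_le one_pos (inv_pos.2 ht)
  have hμt := hμ.mul_le_laplaceExponent_inv hanti ht
  rw [← le_inv_mul_iff₀ ht] at hμt
  calc μ t ≤ t⁻¹ * (6 * laplaceExponent μ t⁻¹) := hμt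
    _ ≤ t⁻¹ * (6 * ((1 + t⁻¹) * laplaceExponent μ 1)) := by gcongr
    _ = _ := by
      rw [Real.rpow_neg_one, Real.rpow_neg ht.le, Real.rpow_two]
      ring

lemma heatKernel_mul_le (hμ : IsLevyDensity μ) (hanti : AntitoneOn μ (Ioi 0)) (ht : 0 < t) :
    heatKernel d t 1 * μ t ≤
      6 * laplaceExponent μ 1 * (heatKernel d t 1 * (t ^ (-1 : ℝ) + t ^ (-2 : ℝ))) := by
  rw [mul_left_comm]
  exact mul_le_mul_of_nonneg_left (hμ.le_laplaceExponent_one_mul_rpow_add hanti ht)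
    (heatKernel_pos ht).le

lemma integrableOn_heatKernel_mul (hμ : IsLevyDensity μ) (hanti : AntitoneOn μ (Ioi 0))
    (hd : 0 < d) : IntegrableOn (fun t => heatKernel d t 1 * μ t) (Ioi 0) := by
  refine ((integrableOn_heatKernel_one_mul_rpow_add hd).const_mul
    (6 * laplaceExponent μ 1)).mono' (measurable_heatKernel.aestronglyMeasurable.mul
      (aemeasurable_restrict_of_antitoneOn measurableSet_Ioi hanti).aestronglyMeasurable) ?_
  refine ae_restrict_of_forall_mem measurableSet_Ioi fun t ht => ?_
  rw [Real.norm_of_nonneg (mul_nonneg (heatKernel_pos ht).le (hμ.nonneg t ht))]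
  exact hμ.heatKernel_mul_le hanti ht

lemma jumpDensity_nonneg (hμ : IsLevyDensity μ) : 0 ≤ jumpDensity d μ r :=
  setIntegral_nonneg measurableSet_Ioi fun t ht =>
    mul_nonneg (heatKernel_pos ht).le (hμ.nonneg t ht)

lemma jumpDensity_one_le (hμ : IsLevyDensity μ) (hanti : AntitoneOn μ (Ioi 0)) (hd : 0 < d) :
    jumpDensity d μ 1 ≤ 6 * laplaceExponent μ 1 *
      ∫ t in Ioi (0 : ℝ), heatKernel d t 1 * (t ^ (-1 : ℝ) + t ^ (-2 : ℝ)) := by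
  rw [jumpDensity, ← integral_const_mul]
  exact setIntegral_mono_on (hμ.integrableOn_heatKernel_mul hanti hd)
    ((integrableOn_heatKernel_one_mul_rpow_add hd).const_mul _) measurableSet_Ioi
    fun t ht => hμ.heatKernel_mul_le hanti ht

lemma le_jumpDensity_one (hμ : IsLevyDensity μ) (hanti : AntitoneOn μ (Ioi 0)) (hd : 0 < d) :
    (4 * Real.pi) ^ (-d / 2) * Real.exp (-(1 / 2)) / 2 * μ 1 ≤ jumpDensity d μ 1 := by
  have hIoc : ∀ t ∈ Ioc (1 / 2 : ℝ) 1,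
      (4 * Real.pi) ^ (-d / 2) * Real.exp (-(1 / 2)) * μ 1 ≤ heatKernel d t 1 * μ t := by
    rintro t ⟨hhalf, hone⟩
    have ht : 0 < t := by linarith
    refine mul_le_mul ?_ (hanti ht (mem_Ioi.2 one_pos) hone) (hμ.nonneg 1 one_pos)
      (heatKernel_pos ht).le
    refine mul_le_mul ?_ ?_ (Real.exp_pos _).le (by positivity)
    · exact Real.rpow_le_rpow_of_nonpos (by positivity)
        (mul_le_of_le_one_right (by positivity) hone) (by linarith)
    · rw [Real.exp_le_exp, neg_le_neg_iff, div_le_div_iff₀ (by positivity) two_pos]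
      linarith
  have hle := mul_measureReal_le_setIntegral_of_subset measurableSet_Ioc measurableSet_Ioi
    (fun t ht => one_half_pos.trans ht.1) measure_Ioc_lt_top.ne
    (fun t ht => mul_nonneg (heatKernel_pos ht).le (hμ.nonneg t ht)) hIoc
    (hμ.integrableOn_heatKernel_mul hanti hd)
  rw [Real.volume_real_Ioc_of_le (by norm_num)] at hle
  rw [jumpDensity]
  linarith

lemma jumpDensity_isBigO (hμ : IsLevyDensity μ) (hanti : AntitoneOn μ (Ioi 0)) (hd : 0 < d) :
    jumpDensity d μ =O[𝓝[>] 0] fun r => r ^ (-d) * laplaceExponent μ (r ^ (-2 : ℝ)) := by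
  refine .of_bound (6 * ∫ t in Ioi (0 : ℝ), heatKernel d t 1 * (t ^ (-1 : ℝ) + t ^ (-2 : ℝ))) ?_
  filter_upwards [self_mem_nhdsWithin] with r (hr : 0 < r)
  have hφ : 0 ≤ laplaceExponent μ (r ^ (-2 : ℝ)) := hμ.laplaceExponent_nonneg (by positivity)
  have hle := (hμ.comp_mul_left (pow_pos hr 2)).jumpDensity_one_le
    (antitoneOn_comp_mul_left hanti (pow_pos hr 2)) hd
  have hinv : (r ^ 2)⁻¹ = r ^ (-2 : ℝ) := by rw [Real.rpow_neg hr.le, Real.rpow_two]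
  rw [laplaceExponent_comp_mul_left μ (pow_pos hr 2), one_div, hinv] at hle
  rw [Real.norm_of_nonneg hμ.jumpDensity_nonneg, Real.norm_of_nonneg (by positivity),
    jumpDensity_eq_rpow_mul hr]
  refine (mul_le_mul_of_nonneg_left hle (Real.rpow_nonneg hr.le _)).trans_eq ?_
  rw [show -d = 2 - d + -2 by ring, Real.rpow_add hr]
  ring

lemma isBigO_jumpDensity (hμ : IsLevyDensity μ) (hanti : AntitoneOn μ (Ioi 0)) (hd : 0 < d) :
    (fun r => r ^ (2 - d) * μ (r ^ 2)) =O[𝓝[>] 0] jumpDensity d μ := by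
  have hc : 0 < (4 * Real.pi) ^ (-d / 2) * Real.exp (-(1 / 2)) / 2 := by positivity
  refine .of_bound ((4 * Real.pi) ^ (-d / 2) * Real.exp (-(1 / 2)) / 2)⁻¹ ?_
  filter_upwards [self_mem_nhdsWithin] with r (hr : 0 < r)
  have hμr := hμ.nonneg (r ^ 2) (by positivity)
  have hle := (hμ.comp_mul_left (pow_pos hr 2)).le_jumpDensity_one
    (antitoneOn_comp_mul_left hanti (pow_pos hr 2)) hd
  rw [Real.norm_of_nonneg hμ.jumpDensity_nonneg, Real.norm_of_nonneg (by positivity),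
    jumpDensity_eq_rpow_mul hr, le_inv_mul_iff₀ hc, mul_left_comm]
  rw [mul_one] at hle
  gcongr

theorem jumpDensity_isTheta (hμ : IsLevyDensity μ) (hanti : AntitoneOn μ (Ioi 0)) {ρ : ℝ}
    (hρ0 : 0 < ρ) (hρ1 : ρ < 1) (hφ : RegularlyVarying (laplaceExponent μ) ρ) (hd : 0 < d) :
    jumpDensity d μ =Θ[𝓝[>] 0] fun r => r ^ (-d) * laplaceExponent μ (r ^ (-2 : ℝ)) := by
  refine ⟨hμ.jumpDensity_isBigO hanti hd, IsBigO.trans ?_ (hμ.isBigO_jumpDensity hanti hd)⟩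
  have hO := (isBigO_refl (fun r : ℝ => r ^ (2 - d)) (𝓝[>] 0)).mul
    ((hμ.mul_laplaceExponent_isBigO hanti hρ0 hρ1 hφ).comp_tendsto
      (tendsto_rpow_neg_nhdsGT_zero (neg_lt_zero.2 two_pos)))
  refine hO.congr' ?_ ?_ <;> filter_upwards [self_mem_nhdsWithin] with r (hr : 0 < r)
  · rw [Function.comp_apply, ← mul_assoc, ← Real.rpow_add hr]
    ring_nf
  · rw [Function.comp_apply, Real.rpow_neg hr.le, inv_inv, Real.rpow_two]

theorem jumpDensity_isTheta_of_isEquivalent (hμ : IsLevyDensity μ) (hanti : AntitoneOn μ (Ioi 0))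
    {ρ : ℝ} (hρ0 : 0 < ρ) (hρ1 : ρ < 1) {ℓ : ℝ → ℝ} (hℓ : RegularlyVarying ℓ 0)
    (hφ : laplaceExponent μ ~[atTop] fun l => l ^ ρ * ℓ l) (hd : 0 < d) :
    jumpDensity d μ =Θ[𝓝[>] 0] fun r => r ^ (-d - 2 * ρ) * ℓ (r ^ (-2 : ℝ)) := by
  have hRV : RegularlyVarying (laplaceExponent μ) ρ := by
    simpa using (hℓ.rpow_mul ρ).of_isEquivalent hφ
  have hφ0 := (hφ.comp_tendsto (tendsto_rpow_neg_nhdsGT_zero (neg_lt_zero.2 two_pos))).isTheta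
  refine ((hμ.jumpDensity_isTheta hanti hρ0 hρ1 hRV hd).trans
    ((isTheta_refl _ _).mul hφ0)).trans_eventuallyEq ?_
  filter_upwards [self_mem_nhdsWithin] with r (hr : 0 < r)
  rw [Function.comp_apply, ← mul_assoc, ← Real.rpow_mul hr.le, ← Real.rpow_add hr]
  ring_nf

end IsLevyDensity

end JumpDensity

theorem stable_like_jump_asymp_general
    {α : ℝ} (hα0 : 0 < α) {μ φ φ' ℓ : ℝ → ℝ} (hμ : IsLevyDensity μ)
    (hφ : ∀ l, 0 < l → φ l = laplaceExponent μ l)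
    (hφ' : ∀ l, 0 < l → φ' l = laplaceExponentDeriv μ l)
    (hℓpos : ∀ t, 0 < t → 0 < ℓ t) (hℓslow : RegularlyVarying ℓ 0)
    (hφasym : Tendsto (fun l => φ l / (l ^ (α / 2) * ℓ l)) atTop (𝓝 1)) :
    RegularlyVarying φ' (α / 2 - 1) ∧
    (α < 2 → AntitoneOn μ (Ioi 0) → ∀ d : ℝ, 0 < d → ∃ c C r₀ : ℝ, 0 < c ∧ c ≤ C ∧ 0 < r₀ ∧
      ∀ r, 0 < r → r < r₀ →
        c * (r ^ (-d - α) * ℓ (r ^ (-2 : ℝ))) ≤ jumpDensity d μ r ∧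
        jumpDensity d μ r ≤ C * (r ^ (-d - α) * ℓ (r ^ (-2 : ℝ)))) := by
  have hequiv : laplaceExponent μ ~[atTop] fun l => l ^ (α / 2) * ℓ l :=
    (isEquivalent_of_tendsto_one hφasym).congr_left ((eventually_gt_atTop 0).mono hφ)
  have hRV : RegularlyVarying (laplaceExponent μ) (α / 2) := by
    simpa using (hℓslow.rpow_mul (α / 2)).of_isEquivalent hequiv
  refine ⟨?_, fun hα2 hanti d hd => ?_⟩
  · exact (hμ.regularlyVarying_laplaceExponentDeriv (half_pos hα0).ne' hRV).of_isEquivalent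
      (EventuallyEq.isEquivalent ((eventually_gt_atTop 0).mono hφ'))
  · have hj := hμ.jumpDensity_isTheta_of_isEquivalent hanti (half_pos hα0) (by linarith) hℓslow
      hequiv hd
    rw [mul_div_cancel₀ α two_ne_zero] at hj
    exact exists_bounds_of_isTheta_nhdsGT_zero hj (fun _ _ => hμ.jumpDensity_nonneg)
      fun r hr => (mul_pos (by positivity) (hℓpos _ (by positivity))).le

/-- If `φ(λ) ∼ λ^{α/2} ℓ(λ)` at infinity with `α ∈ (0,2)` and `ℓ` slowly varying, then
(a) `φ'` is regularly varying at infinity with index `α/2 - 1`, and (b) for every `d ≥ 3`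
the Lévy density of the subordinate Brownian motion satisfies `j(r) ≍ r^{-d-α} ℓ(r⁻²)`
as `r → 0+`. -/
theorem stable_like_jump_asymp
    (α : ℝ) (hα0 : 0 < α) (hα2 : α < 2)
    (μ φ φ' : ℝ → ℝ)
    (hμpos : ∀ t, 0 < t → 0 < μ t)
    (hμdec : ∀ s t, 0 < s → s ≤ t → μ t ≤ μ s)
    (hμint : IntegrableOn (fun t => min 1 t * μ t) (Ioi 0))
    (hφ : ∀ l, 0 < l → φ l = ∫ t in Ioi (0:ℝ), (1 - Real.exp (-(l * t))) * μ t)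
    (hφ' : ∀ l, 0 < l → φ' l = ∫ t in Ioi (0:ℝ), t * Real.exp (-(l * t)) * μ t)
    (ℓ : ℝ → ℝ)
    (hℓpos : ∀ t, 0 < t → 0 < ℓ t)
    (hℓslow : ∀ x, 0 < x → Tendsto (fun l => ℓ (l * x) / ℓ l) atTop (𝓝 1))
    (hφasym : Tendsto (fun l => φ l / (l ^ (α / 2) * ℓ l)) atTop (𝓝 1)) :
    (∀ x, 0 < x →
      Tendsto (fun l => φ' (l * x) / φ' l) atTop (𝓝 (x ^ (α / 2 - 1)))) ∧
    (∀ d : ℕ, 3 ≤ d → ∃ c C r₀ : ℝ, 0 < c ∧ c ≤ C ∧ 0 < r₀ ∧ ∀ r, 0 < r → r < r₀ →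
      c * (r ^ (-(d:ℝ) - α) * ℓ (r ^ (-2 : ℝ))) ≤
        (∫ t in Ioi (0:ℝ),
          (4 * Real.pi * t) ^ (-(d:ℝ) / 2) * Real.exp (-(r ^ 2 / (4 * t))) * μ t) ∧
      (∫ t in Ioi (0:ℝ),
          (4 * Real.pi * t) ^ (-(d:ℝ) / 2) * Real.exp (-(r ^ 2 / (4 * t))) * μ t) ≤
        C * (r ^ (-(d:ℝ) - α) * ℓ (r ^ (-2 : ℝ)))) := by
  obtain ⟨ha, hb⟩ := stable_like_jump_asymp_general hα0 ⟨fun t ht => (hμpos t ht).le, hμint⟩ hφ hφ'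
    hℓpos (by simpa [RegularlyVarying] using hℓslow) hφasym
  exact ⟨ha, fun d hd => hb hα2 (fun s hs t _ => hμdec s t hs) d (Nat.cast_pos.2 (by lia))⟩
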